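/- arXiv:math/0608757 — 5 statements merged into one kernel-verified Lean document; each statement's English description precedes it below -/
import Mathlib

section
/- Let ν > 0 and define C : ℝ⁴ → ℝ by C(x,t,u,p) = −0.01·t·(t·u − x)²·p². Let u : ℝ × ℝ → ℝ be a smooth (C^∞) solution of the modified Burgers equation ∂u/∂t + u·∂u/∂x − ν·∂²u/∂x² + ∂/∂x[ C(x,t,u(x,t),∂u/∂x(x,t))·∂u/∂x(x,t) ] = 0 on all of ℝ². Then for every ε ∈ ℝ, the function v(x,t) = u(x − εt, t) + ε is also a smooth solution of the same modified equation (the differential approximation of the invariant scheme is preserved by the Galilean transformation (x,t,u) ↦ (x + εt, t, u + ε)). -/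
/-- Partial derivative with respect to the first (space) variable. -/
noncomputable def pdx (u : ℝ × ℝ → ℝ) : ℝ × ℝ → ℝ :=
  fun p => deriv (fun y => u (y, p.2)) p.1

/-- Partial derivative with respect to the second (time) variable. -/
noncomputable def pdt (u : ℝ × ℝ → ℝ) : ℝ × ℝ → ℝ :=
  fun p => deriv (fun s => u (p.1, s)) p.2

/-- The artificial viscosity coefficient \`C(x,t,u,p) = −0.01 t (tu − x)² p²\`. -/
noncomputable def Cvisc (x t u p : ℝ) : ℝ := -0.01 * t * (t * u - x) ^ 2 * p ^ 2

/-- \`u\` is a smooth solution of the modified Burgers equation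
\`u_t + u u_x − ν u_xx + (C(x,t,u,u_x) u_x)_x = 0\`, the differential
approximation of the invariant scheme. -/
def IsModifiedBurgersSolution (ν : ℝ) (u : ℝ × ℝ → ℝ) : Prop :=
  ContDiff ℝ (⊤ : ℕ∞) u ∧
    ∀ p : ℝ × ℝ,
      pdt u p + u p * pdx u p - ν * pdx (pdx u) p
        + pdx (fun q => Cvisc q.1 q.2 (u q) (pdx u q) * pdx u q) p = 0

theorem pdx_gal (f : ℝ × ℝ → ℝ) (ε : ℝ) :
    pdx (fun p => f (p.1 - ε * p.2, p.2)) = fun p => pdx f (p.1 - ε * p.2, p.2) := by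
  funext p
  simp only [pdx]
  exact deriv_comp_sub_const (f := fun y => f (y, p.2)) (a := ε * p.2) (x := p.1)

theorem pdx_gal_add (f : ℝ × ℝ → ℝ) (ε : ℝ) :
    pdx (fun p => f (p.1 - ε * p.2, p.2) + ε) = fun p => pdx f (p.1 - ε * p.2, p.2) := by
  rw [← pdx_gal]
  funext p
  simp only [pdx, deriv_add_const]

theorem pdt_gal (f : ℝ × ℝ → ℝ) (hf : Differentiable ℝ f) (ε : ℝ) (p : ℝ × ℝ) :
    pdt (fun p => f (p.1 - ε * p.2, p.2) + ε) p
      = pdt f (p.1 - ε * p.2, p.2) - ε * pdx f (p.1 - ε * p.2, p.2) := by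
  obtain ⟨x, t⟩ := p
  have hF := (hf (x - ε * t, t)).hasFDerivAt
  set L := fderiv ℝ f (x - ε * t, t) with hL
  have h1 : HasDerivAt (fun s : ℝ => (x - ε * s, s)) (-ε, 1) t := by
    have := (((hasDerivAt_id t).const_mul ε).const_sub x).prodMk (hasDerivAt_id t)
    simpa using this
  have h2 : HasDerivAt (fun s : ℝ => (x - ε * t, s)) (0, 1) t :=
    (hasDerivAt_const t (x - ε * t)).prodMk (hasDerivAt_id t)
  have h3 : HasDerivAt (fun y : ℝ => (y, t)) (1, 0) (x - ε * t) :=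
    (hasDerivAt_id (x - ε * t)).prodMk (hasDerivAt_const (x - ε * t) t)
  have e1 : deriv (fun s : ℝ => f (x - ε * s, s) + ε) t = L (-ε, 1) :=
    ((HasFDerivAt.comp_hasDerivAt (f := fun s : ℝ => (x - ε * s, s)) t hF h1).add_const ε).deriv
  have e2 : deriv (fun s : ℝ => f (x - ε * t, s)) t = L (0, 1) :=
    (hF.comp_hasDerivAt t h2).deriv
  have e3 : deriv (fun y : ℝ => f (y, t)) (x - ε * t) = L (1, 0) :=
    (hF.comp_hasDerivAt (x - ε * t) h3).deriv
  simp only [pdt, pdx]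
  rw [e1, e2, e3]
  have : ((-ε, 1) : ℝ × ℝ) = (0, 1) - ε • (1, 0) := by simp
  rw [this, map_sub, map_smul, smul_eq_mul]

/-- The differential approximation of the invariant scheme is preserved by the
Galilean transformation `(x,t,u) ↦ (x + εt, t, u + ε)`. -/
theorem modified_burgers_invariant_galilean (ν : ℝ) (hν : 0 < ν)
    (u : ℝ × ℝ → ℝ) (hu : IsModifiedBurgersSolution ν u) (ε : ℝ) :
    IsModifiedBurgersSolution ν (fun p => u (p.1 - ε * p.2, p.2) + ε) := by
  obtain ⟨hs, he⟩ := hu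
  refine ⟨by fun_prop, fun p => ?_⟩
  have hd : Differentiable ℝ u := hs.differentiable (by simp)
  rw [pdt_gal u hd, pdx_gal_add, pdx_gal]
  have hC : (fun q : ℝ × ℝ => Cvisc q.1 q.2 (u (q.1 - ε * q.2, q.2) + ε)
        (pdx u (q.1 - ε * q.2, q.2)) * pdx u (q.1 - ε * q.2, q.2))
      = fun q => (fun q : ℝ × ℝ => Cvisc q.1 q.2 (u q) (pdx u q) * pdx u q)
          (q.1 - ε * q.2, q.2) := by
    funext q
    simp only [Cvisc]
    ring
  rw [hC, pdx_gal (fun q : ℝ × ℝ => Cvisc q.1 q.2 (u q) (pdx u q) * pdx u q) ε]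
  have := he (p.1 - ε * p.2, p.2)
  linear_combination this
end

section
/- Let ν > 0 and define C : ℝ⁴ → ℝ by C(x,t,u,p) = −0.01·t·(t·u − x)²·p². Let u : ℝ × ℝ → ℝ be a smooth (C^∞) solution of the modified Burgers equation ∂u/∂t + u·∂u/∂x − ν·∂²u/∂x² + ∂/∂x[ C(x,t,u(x,t),∂u/∂x(x,t))·∂u/∂x(x,t) ] = 0 on all of ℝ². Then for every λ > 0, the function v(x,t) = λ·u(λx, λ²t) is also a smooth solution of the same modified equation with the same viscosity ν (the differential approximation of the invariant scheme is preserved by the dilatation (x,t,u) ↦ (λ⁻¹x, λ⁻²t, λu)). -/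
theorem pdx_scale (w : ℝ × ℝ → ℝ) (a l m : ℝ) :
    pdx (fun p => a * w (l * p.1, m * p.2)) = fun p => (a * l) * pdx w (l * p.1, m * p.2) := by
  funext p
  have h := deriv_comp_mul_left l (fun y => w (y, m * p.2)) p.1
  simp only [pdx, deriv_const_mul_field, smul_eq_mul] at h ⊢
  rw [h]; ring

theorem pdt_scale (w : ℝ × ℝ → ℝ) (a l m : ℝ) :
    pdt (fun p => a * w (l * p.1, m * p.2)) = fun p => (a * m) * pdt w (l * p.1, m * p.2) := by
  funext p
  have h := deriv_comp_mul_left m (fun y => w (l * p.1, y)) p.2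
  simp only [pdt, deriv_const_mul_field, smul_eq_mul] at h ⊢
  rw [h]; ring

/-- The differential approximation of the invariant scheme is preserved by the
dilatation `(x,t,u) ↦ (λ⁻¹x, λ⁻²t, λu)`. -/
theorem modified_burgers_invariant_dilatation (ν : ℝ) (hν : 0 < ν)
    (u : ℝ × ℝ → ℝ) (hu : IsModifiedBurgersSolution ν u) (l : ℝ) (hl : 0 < l) :
    IsModifiedBurgersSolution ν (fun p => l * u (l * p.1, l ^ 2 * p.2)) := by
  obtain ⟨hs, he⟩ := hu
  refine ⟨by fun_prop, fun p => ?_⟩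
  have hC : (fun q : ℝ × ℝ => Cvisc q.1 q.2 (l * u (l * q.1, l ^ 2 * q.2))
        (l * l * pdx u (l * q.1, l ^ 2 * q.2)) * (l * l * pdx u (l * q.1, l ^ 2 * q.2)))
      = fun q : ℝ × ℝ => (l * l) * (fun q : ℝ × ℝ => Cvisc q.1 q.2 (u q) (pdx u q) * pdx u q)
          (l * q.1, l ^ 2 * q.2) := by
    funext q
    simp only [Cvisc]
    ring
  rw [pdt_scale, pdx_scale, pdx_scale]
  simp only []
  rw [hC, pdx_scale (fun q : ℝ × ℝ => Cvisc q.1 q.2 (u q) (pdx u q) * pdx u q) (l * l) l (l ^ 2)]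
  have h := he (l * p.1, l ^ 2 * p.2)
  linear_combination l ^ 3 * h
end

section
/- Consider the six smooth vector fields on ℝ⁴ with coordinates (x,t,u,ν): X₁ = (1,0,0,0), X₂ = (0,1,0,0), X₃ = (x, 2t, −u, 0), X₄ = (xt, t², x − ut, 0), X₅ = (t, 0, 1, 0), X₆ = (0, −t, u, ν). Then their real linear span is a Lie algebra: for every i, j ∈ {1,…,6} there exist real constants c₁,…,c₆ such that the Lie bracket [X_i, X_j], defined pointwise by [X,Y](p) = (DY)(p)·X(p) − (DX)(p)·Y(p) (where D denotes the total derivative), equals c₁X₁ + c₂X₂ + c₃X₃ + c₄X₄ + c₅X₅ + c₆X₆ at every point of ℝ⁴. -/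
/-- Pointwise Lie bracket of two vector fields on `ℝ⁴`:
`[X,Y](p) = DY(p)·X(p) − DX(p)·Y(p)`. -/
noncomputable def vfBracket (X Y : ℝ × ℝ × ℝ × ℝ → ℝ × ℝ × ℝ × ℝ) :
    ℝ × ℝ × ℝ × ℝ → ℝ × ℝ × ℝ × ℝ :=
  fun p => fderiv ℝ Y p (X p) - fderiv ℝ X p (Y p)

/-- The six infinitesimal generators of the symmetry group of the Burgers
equation, as vector fields on `ℝ⁴` with coordinates `(x, t, u, ν)`. -/
noncomputable def burgersVF : Fin 6 → (ℝ × ℝ × ℝ × ℝ → ℝ × ℝ × ℝ × ℝ) :=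
  ![fun _ => (1, 0, 0, 0),
    fun _ => (0, 1, 0, 0),
    fun p => (p.1, 2 * p.2.1, -p.2.2.1, 0),
    fun p => (p.1 * p.2.1, p.2.1 ^ 2, p.1 - p.2.2.1 * p.2.1, 0),
    fun p => (p.2.1, 0, 1, 0),
    fun p => (0, -p.2.1, p.2.2.1, p.2.2.2)]

/-- Directional derivatives of the six fields. -/
noncomputable def burgersD : Fin 6 → (ℝ × ℝ × ℝ × ℝ → ℝ × ℝ × ℝ × ℝ → ℝ × ℝ × ℝ × ℝ) :=
  ![fun _ _ => (0, 0, 0, 0),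
    fun _ _ => (0, 0, 0, 0),
    fun _ v => (v.1, 2 * v.2.1, -v.2.2.1, 0),
    fun p v => (p.1 * v.2.1 + p.2.1 * v.1, 2 * p.2.1 * v.2.1,
      v.1 - (p.2.2.1 * v.2.1 + p.2.1 * v.2.2.1), 0),
    fun _ v => (v.2.1, 0, 0, 0),
    fun _ v => (0, -v.2.1, v.2.2.1, v.2.2.2)]

theorem burgers_fderiv (i : Fin 6) (p v : ℝ × ℝ × ℝ × ℝ) :
    fderiv ℝ (burgersVF i) p v = burgersD i p v := by
  have hx : HasFDerivAt (fun p : ℝ × ℝ × ℝ × ℝ => p.1) _ p := hasFDerivAt_fst (𝕜 := ℝ)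
  have h2 : HasFDerivAt (fun p : ℝ × ℝ × ℝ × ℝ => p.2) _ p := hasFDerivAt_snd (𝕜 := ℝ)
  have ht : HasFDerivAt (fun p : ℝ × ℝ × ℝ × ℝ => p.2.1) _ p := h2.fst
  have hu : HasFDerivAt (fun p : ℝ × ℝ × ℝ × ℝ => p.2.2.1) _ p := h2.snd.fst
  have hn : HasFDerivAt (fun p : ℝ × ℝ × ℝ × ℝ => p.2.2.2) _ p := h2.snd.snd
  have h0 (c : ℝ) : HasFDerivAt (fun _ : ℝ × ℝ × ℝ × ℝ => c) _ p := hasFDerivAt_const (𝕜 := ℝ) c p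
  fin_cases i
  · have h : HasFDerivAt (𝕜 := ℝ) (burgersVF 0) _ p := hasFDerivAt_const (1, 0, 0, 0) p
    simp [h.fderiv, burgersD]
    rfl
  · have h : HasFDerivAt (𝕜 := ℝ) (burgersVF 1) _ p := hasFDerivAt_const (0, 1, 0, 0) p
    simp [h.fderiv, burgersD]
    rfl
  · have h : HasFDerivAt (𝕜 := ℝ) (burgersVF 2) _ p :=
      hx.prodMk ((ht.const_mul 2).prodMk (hu.fun_neg.prodMk (h0 0)))
    simp [h.fderiv, burgersD]
  · have h : HasFDerivAt (𝕜 := ℝ) (burgersVF 3) _ p :=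
      (hx.fun_mul ht).prodMk ((HasFDerivAt.pow ht 2).prodMk ((hx.fun_sub (hu.fun_mul ht)).prodMk (h0 0)))
    simp [h.fderiv, burgersD]
  · have h : HasFDerivAt (𝕜 := ℝ) (burgersVF 4) _ p :=
      ht.prodMk ((h0 0).prodMk ((h0 1).prodMk (h0 0)))
    simp [h.fderiv, burgersD]
  · have h : HasFDerivAt (𝕜 := ℝ) (burgersVF 5) _ p :=
      (h0 0).prodMk (ht.fun_neg.prodMk (hu.prodMk hn))
    simp [h.fderiv, burgersD]

/-- Structure constants. -/
noncomputable def burgersC : Fin 6 → Fin 6 → Fin 6 → ℝ :=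
  ![![0, 0, Pi.single 0 (1), Pi.single 4 (1), 0, 0],
    ![0, 0, Pi.single 1 (2), Pi.single 2 (1), Pi.single 0 (1), Pi.single 1 (-1)],
    ![Pi.single 0 (-1), Pi.single 1 (-2), 0, Pi.single 3 (2), Pi.single 4 (1), 0],
    ![Pi.single 4 (-1), Pi.single 2 (-1), Pi.single 3 (-2), 0, 0, Pi.single 3 (1)],
    ![0, Pi.single 0 (-1), Pi.single 4 (-1), 0, 0, Pi.single 4 (1)],
    ![0, Pi.single 1 (1), 0, Pi.single 3 (-1), Pi.single 4 (-1), 0]]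

/-- The real linear span of the six symmetry generators of the Burgers equation
is closed under the Lie bracket: it is a Lie algebra. -/
theorem burgers_symmetry_lie_algebra :
    ∀ i j : Fin 6, ∃ c : Fin 6 → ℝ, ∀ p : ℝ × ℝ × ℝ × ℝ,
      vfBracket (burgersVF i) (burgersVF j) p =
        ∑ k : Fin 6, c k • burgersVF k p := by
  intro i j
  refine ⟨burgersC i j, fun p => ?_⟩
  obtain ⟨x, t, u, n⟩ := p
  simp only [vfBracket, burgers_fderiv, Fin.sum_univ_six]
  fin_cases i <;> fin_cases j <;>
    simp [burgersD, burgersVF, burgersC, Pi.single_apply] <;>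
    (try refine ⟨?_, ?_, ?_⟩) <;> (try constructor) <;> ring
end

section
/- Fix ν > 0, h > 0, τ > 0. For a smooth function u : ℝ × ℝ → ℝ define g₁ = −∂_x(u²/2) + ν·∂²_x u, g₂ = ∂_x(−g₁·u) + ν·∂²_x g₁, and the FTCS first differential approximation operator E[u; h, τ, ν] = ∂_t u + ∂_x(u²/2) − ν·∂²_x u + (τ/2)·g₂ + (h²/12)·∂³_x(u²) − (νh²/12)·∂⁴_x u. Suppose u is a smooth (C^∞) solution of E[u; h, τ, ν] = 0 on ℝ². Then for every λ > 0, the function v(x,t) = λ·u(λx, λ²t) satisfies E[v; h/λ, τ/λ², ν] = 0 on ℝ² (the FTCS first differential approximation is invariant under the dilatation (x,t,u,h,τ) ↦ (λ⁻¹x, λ⁻²t, λu, λ⁻¹h, λ⁻²τ)). -/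
/-- \`g₁ = −(u²/2)_x + ν u_xx\`. -/
noncomputable def g1 (ν : ℝ) (u : ℝ × ℝ → ℝ) : ℝ × ℝ → ℝ :=
  fun p => -pdx (fun q => (u q) ^ 2 / 2) p + ν * pdx (pdx u) p

/-- \`g₂ = (−g₁ u)_x + ν (g₁)_xx\`. -/
noncomputable def g2 (ν : ℝ) (u : ℝ × ℝ → ℝ) : ℝ × ℝ → ℝ :=
  fun p => pdx (fun q => -g1 ν u q * u q) p + ν * pdx (pdx (g1 ν u)) p

/-- \`g₃ = (−g₂ u − g₁²)_x + ν (g₂)_xx\`. -/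
noncomputable def g3 (ν : ℝ) (u : ℝ × ℝ → ℝ) : ℝ × ℝ → ℝ :=
  fun p => pdx (fun q => -g2 ν u q * u q - (g1 ν u q) ^ 2) p
    + ν * pdx (pdx (g2 ν u)) p

/-- The first differential approximation operator of the FTCS scheme:
\`E[u; h, τ, ν] = u_t + (u²/2)_x − ν u_xx + (τ/2) g₂ + (h²/12)(u²)_xxx −
(νh²/12) u_xxxx\`. -/
noncomputable def ftcsFDA (h τ ν : ℝ) (u : ℝ × ℝ → ℝ) : ℝ × ℝ → ℝ :=
  fun p =>
    pdt u p + pdx (fun q => (u q) ^ 2 / 2) p - ν * pdx (pdx u) p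
      + τ / 2 * g2 ν u p
      + h ^ 2 / 12 * pdx (pdx (pdx (fun q => (u q) ^ 2))) p
      - ν * h ^ 2 / 12 * pdx (pdx (pdx (pdx u))) p

/-- The first differential approximation operator of the Lax–Wendroff scheme:
\`E[u; h, τ, ν] = u_t + (u²/2)_x − ν u_xx + (τ²/6) g₃ + (h²/12)(u²)_xxx −
(νh²/12) u_xxxx\`. -/
noncomputable def laxWendroffFDA (h τ ν : ℝ) (u : ℝ × ℝ → ℝ) : ℝ × ℝ → ℝ :=
  fun p =>
    pdt u p + pdx (fun q => (u q) ^ 2 / 2) p - ν * pdx (pdx u) p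
      + τ ^ 2 / 6 * g3 ν u p
      + h ^ 2 / 12 * pdx (pdx (pdx (fun q => (u q) ^ 2))) p
      - ν * h ^ 2 / 12 * pdx (pdx (pdx (pdx u))) p

theorem pdx_scale_s17 (c l m : ℝ) (f : ℝ × ℝ → ℝ) :
    pdx (fun q => c * f (l * q.1, m * q.2)) = fun q => (c * l) * pdx f (l * q.1, m * q.2) := by
  funext p
  have := deriv_comp_mul_left l (fun y => f (y, m * p.2)) p.1
  simp only [pdx, deriv_const_mul_field, smul_eq_mul] at this ⊢
  rw [this]; ring

theorem pdt_scale_s17 (c l m : ℝ) (f : ℝ × ℝ → ℝ) :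
    pdt (fun q => c * f (l * q.1, m * q.2)) = fun q => (c * m) * pdt f (l * q.1, m * q.2) := by
  funext p
  have := deriv_comp_mul_left m (fun y => f (l * p.1, y)) p.2
  simp only [pdt, deriv_const_mul_field, smul_eq_mul] at this ⊢
  rw [this]; ring

theorem sq_scale (l m : ℝ) (u : ℝ × ℝ → ℝ) :
    pdx (fun q : ℝ × ℝ => (l * u (l * q.1, m * q.2)) ^ 2)
      = fun q => (l ^ 2 * l) * pdx (fun r => u r ^ 2) (l * q.1, m * q.2) := by
  rw [← pdx_scale_s17 (l ^ 2) l m (fun r => u r ^ 2)]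
  congr 1; funext q; ring

theorem sq2_scale (l m : ℝ) (u : ℝ × ℝ → ℝ) :
    pdx (fun q : ℝ × ℝ => (l * u (l * q.1, m * q.2)) ^ 2 / 2)
      = fun q => (l ^ 2 * l) * pdx (fun r => u r ^ 2 / 2) (l * q.1, m * q.2) := by
  rw [← pdx_scale_s17 (l ^ 2) l m (fun r => u r ^ 2 / 2)]
  congr 1; funext q; ring

theorem g1_scale (ν l m : ℝ) (u : ℝ × ℝ → ℝ) :
    g1 ν (fun q => l * u (l * q.1, m * q.2))
      = fun q => l ^ 3 * g1 ν u (l * q.1, m * q.2) := by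
  funext p
  unfold g1
  rw [sq2_scale, pdx_scale_s17, pdx_scale_s17]
  ring

theorem g2_scale (ν l m : ℝ) (u : ℝ × ℝ → ℝ) :
    g2 ν (fun q => l * u (l * q.1, m * q.2))
      = fun q => l ^ 5 * g2 ν u (l * q.1, m * q.2) := by
  funext p
  unfold g2
  have h : (fun q : ℝ × ℝ => -(l ^ 3 * g1 ν u (l * q.1, m * q.2)) * (l * u (l * q.1, m * q.2)))
      = fun q => l ^ 4 * (fun r => -g1 ν u r * u r) (l * q.1, m * q.2) := by
    funext q; ring
  simp only [g1_scale]
  rw [h, pdx_scale_s17 (l ^ 4) l m (fun r => -g1 ν u r * u r), pdx_scale_s17, pdx_scale_s17]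
  ring

/-- The FTCS first differential approximation is invariant under the dilatation
`(x,t,u,h,τ) ↦ (λ⁻¹x, λ⁻²t, λu, λ⁻¹h, λ⁻²τ)`. -/
theorem ftcsFDA_invariant_dilatation (ν h τ : ℝ) (hν : 0 < ν) (hh : 0 < h)
    (hτ : 0 < τ) (u : ℝ × ℝ → ℝ) (hu : ContDiff ℝ (⊤ : ℕ∞) u)
    (hE : ∀ p : ℝ × ℝ, ftcsFDA h τ ν u p = 0) (l : ℝ) (hl : 0 < l) :
    ∀ p : ℝ × ℝ,
      ftcsFDA (h / l) (τ / l ^ 2) ν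
        (fun q => l * u (l * q.1, l ^ 2 * q.2)) p = 0 := by
  intro p
  have h0 := hE (l * p.1, l ^ 2 * p.2)
  unfold ftcsFDA at h0 ⊢
  rw [g2_scale, sq2_scale, sq_scale]
  simp only [pdx_scale_s17, pdt_scale_s17]
  have hl0 : l ≠ 0 := hl.ne'
  rw [← mul_zero (l ^ 3), ← h0]
  field_simp
end

section
/- Fix ν > 0, h > 0, τ > 0. For a smooth function u : ℝ × ℝ → ℝ define g₁ = −∂_x(u²/2) + ν·∂²_x u, g₂ = ∂_x(−g₁·u) + ν·∂²_x g₁ (with viscosity parameter ν in g₁, g₂), and the FTCS first differential approximation operator E[u; h, τ, ν] = ∂_t u + ∂_x(u²/2) − ν·∂²_x u + (τ/2)·g₂ + (h²/12)·∂³_x(u²) − (νh²/12)·∂⁴_x u. Suppose u is a smooth (C^∞) solution of E[u; h, τ, ν] = 0 on ℝ². Then for every λ > 0, the function v(x,t) = λ·u(x, λt) satisfies E[v; h, τ/λ, λν] = 0 on ℝ², where in E[v; h, τ/λ, λν] the functions g₁, g₂ are formed with viscosity λν (invariance of the FTCS first differential approximation under the dilatation (x,t,u,h,τ,ν) ↦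 (x, λ⁻¹t, λu, h, λ⁻¹τ, λν)). -/
theorem pdx_dil (l c : ℝ) (w : ℝ × ℝ → ℝ) :
    pdx (fun q => c * w (q.1, l * q.2)) = fun q => c * pdx w (q.1, l * q.2) := by
  funext p
  simp only [pdx]
  exact deriv_const_mul_field c

theorem pdt_dil (l c : ℝ) (w : ℝ × ℝ → ℝ) (p : ℝ × ℝ) :
    pdt (fun q => c * w (q.1, l * q.2)) p = c * (l * pdt w (p.1, l * p.2)) := by
  simp only [pdt]
  rw [deriv_const_mul_field]
  congr 1
  exact deriv_comp_mul_left l (fun s => w (p.1, s)) p.2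

theorem g1_dil (l ν : ℝ) (u : ℝ × ℝ → ℝ) :
    g1 (l * ν) (fun q => l * u (q.1, l * q.2)) = fun q => l ^ 2 * g1 ν u (q.1, l * q.2) := by
  have h1 : (fun q : ℝ × ℝ => (l * u (q.1, l * q.2)) ^ 2 / 2)
      = fun q => l ^ 2 * (fun r => u r ^ 2 / 2) (q.1, l * q.2) := by
    funext q; ring
  funext p
  unfold g1
  rw [h1, pdx_dil l (l ^ 2) (fun r => u r ^ 2 / 2), pdx_dil, pdx_dil]
  ring

theorem g2_dil (l ν : ℝ) (u : ℝ × ℝ → ℝ) (p : ℝ × ℝ) :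
    g2 (l * ν) (fun q => l * u (q.1, l * q.2)) p = l ^ 3 * g2 ν u (p.1, l * p.2) := by
  have h1 : (fun q : ℝ × ℝ => -(l ^ 2 * g1 ν u (q.1, l * q.2)) * (l * u (q.1, l * q.2)))
      = fun q => l ^ 3 * (fun r => -g1 ν u r * u r) (q.1, l * q.2) := by
    funext q; ring
  unfold g2
  rw [g1_dil, h1, pdx_dil l (l ^ 3) (fun r => -g1 ν u r * u r), pdx_dil, pdx_dil]
  ring

/-- The FTCS first differential approximation is invariant under the dilatation
`(x,t,u,h,τ,ν) ↦ (x, λ⁻¹t, λu, h, λ⁻¹τ, λν)` acting also on the viscosity. -/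
theorem ftcsFDA_invariant_dilatation_viscosity (ν h τ : ℝ) (hν : 0 < ν)
    (hh : 0 < h) (hτ : 0 < τ) (u : ℝ × ℝ → ℝ) (hu : ContDiff ℝ (⊤ : ℕ∞) u)
    (hE : ∀ p : ℝ × ℝ, ftcsFDA h τ ν u p = 0) (l : ℝ) (hl : 0 < l) :
    ∀ p : ℝ × ℝ,
      ftcsFDA h (τ / l) (l * ν) (fun q => l * u (q.1, l * q.2)) p = 0 := by
  intro p
  have h1 : (fun q : ℝ × ℝ => (l * u (q.1, l * q.2)) ^ 2 / 2)
      = fun q => l ^ 2 * (fun r => u r ^ 2 / 2) (q.1, l * q.2) := by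
    funext q; ring
  have h2 : (fun q : ℝ × ℝ => (l * u (q.1, l * q.2)) ^ 2)
      = fun q => l ^ 2 * (fun r => u r ^ 2) (q.1, l * q.2) := by
    funext q; ring
  have key := hE (p.1, l * p.2)
  unfold ftcsFDA at key ⊢
  rw [g2_dil, h1, h2, pdt_dil]
  simp only [pdx_dil l l, pdx_dil l (l ^ 2)]
  rw [pdx_dil l (l ^ 2) (fun r => u r ^ 2 / 2), pdx_dil l (l ^ 2) (fun r => u r ^ 2),
    pdx_dil, pdx_dil]
  have hl' : τ / l / 2 * (l ^ 3 * g2 ν u (p.1, l * p.2))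
      = l ^ 2 * (τ / 2 * g2 ν u (p.1, l * p.2)) := by
    field_simp
  rw [hl']
  linear_combination l ^ 2 * key
end
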